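/- arXiv:2111.02615 — 3 statements merged into one kernel-verified Lean document; each statement's English description precedes it below -/
import Mathlib

section
/- Let Γ be a finite connected simple graph with at least 3 vertices, and suppose Γ has an Eulerian circuit with edge list (e_0, …, e_{ℓ−1}) for which there exists an automorphism σ of Γ with σ(e_i) = e_{(i+2) mod ℓ} for all i. Then one of the following holds: (1) Γ is isomorphic to the cycle graph C_n for some n ≥ 3; (2) Γ is isomorphic to C_{2r}[sK_1,tK_1] for some r ≥ 2 and s, t ≥ 1 with s·t > 1 and Nat.gcd s t = 1; (3) there exist n ≥ 5 and a, b : ZMod n such that a, −a, b, −b are four pairwise distinct nonzero elements, the additive subgroup of ZMod n generated by {a, b} is all of ZMod n, and Γ is isomorphic to Circ(n,{a,−a,b,−b}). -/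
/-- The cycle graph `C_n` on `ZMod n`: `i` and `j` are adjacent iff `j = i + 1` or `i = j + 1`. -/
def cycGraph (n : ℕ) : SimpleGraph (ZMod n) :=
  SimpleGraph.fromRel (fun i j => j = i + 1)

/-- The graph `C_{2r}[sK_1, tK_1]`: vertex set `(ZMod r × ZMod s) ⊕ (ZMod r × ZMod t)`,
with `inl (k, i)` adjacent to `inr (k', j)` iff `k' = k` or `k' = k - 1`. -/
def blowupCycle (r s t : ℕ) : SimpleGraph ((ZMod r × ZMod s) ⊕ (ZMod r × ZMod t)) :=
  SimpleGraph.fromRel (fun v w => ∃ (k : ZMod r) (i : ZMod s) (k' : ZMod r) (j : ZMod t),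
    v = Sum.inl (k, i) ∧ w = Sum.inr (k', j) ∧ (k' = k ∨ k' = k - 1))

/-- The circulant graph `Circ(n, {a, -a, b, -b})` on `ZMod n`: distinct `i, j` are adjacent
iff `j - i ∈ {a, -a, b, -b}`. -/
def circGraph (n : ℕ) (a b : ZMod n) : SimpleGraph (ZMod n) :=
  SimpleGraph.fromRel (fun i j => j - i = a ∨ j - i = b)

lemma aux_orbit {V : Type} (τ : V → V) (hτ : Function.Injective τ) (f : ℕ → V)
    (hf : ∀ i, τ (f i) = f (i+1)) (l : ℕ) (hl : 0 < l) (hper : f l = f 0) :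
    ∃ d, 0 < d ∧ d ∣ l ∧ ∀ i j, f i = f j ↔ i ≡ j [MOD d] := by
  have hit : ∀ i, τ^[i] (f 0) = f i := by
    intro i
    induction i with
    | zero => rfl
    | succ k ih => rw [Function.iterate_succ_apply', ih, hf]
  have hp : Function.IsPeriodicPt τ l (f 0) := by
    show τ^[l] (f 0) = f 0
    rw [hit, hper]
  refine ⟨Function.minimalPeriod τ (f 0), hp.minimalPeriod_pos hl, hp.minimalPeriod_dvd, ?_⟩
  intro i j
  have hpos := hp.minimalPeriod_pos hl
  rw [← hit i, ← hit j, ← Function.iterate_mod_minimalPeriod_eq (n := i),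
    ← Function.iterate_mod_minimalPeriod_eq (n := j),
    Function.iterate_eq_iterate_iff_of_lt_minimalPeriod (Nat.mod_lt _ hpos) (Nat.mod_lt _ hpos)]
  rfl

lemma aux_zmap {V : Type} (f : ℕ → V) (d : ℕ) (hd : 0 < d)
    (h : ∀ i j, f i = f j ↔ i ≡ j [MOD d]) :
    ∃ F : ZMod d → V, Function.Injective F ∧ ∀ i : ℕ, F (i : ZMod d) = f i := by
  have : NeZero d := ⟨hd.ne'⟩
  have key : ∀ i : ℕ, f ((i : ZMod d).val) = f i := by
    intro i
    rw [h, ZMod.val_natCast]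
    exact Nat.mod_modEq i d
  refine ⟨fun x => f x.val, ?_, key⟩
  intro x y hxy
  have := (h _ _).1 hxy
  rw [← ZMod.natCast_eq_natCast_iff] at this
  simpa using this

lemma aux_cycle {V : Type} [Fintype V] (Γ : SimpleGraph V) (hcard : 3 ≤ Fintype.card V)
    (w : ℕ → V) (hadj : ∀ x y, Γ.Adj x y ↔ ∃ i, s(x, y) = s(w i, w (i+1)))
    (hsurj : Function.Surjective w) (n : ℕ) (hn : 0 < n)
    (h : ∀ i j, w i = w j ↔ i ≡ j [MOD n]) :
    ∃ n : ℕ, 3 ≤ n ∧ Nonempty (Γ ≃g cycGraph n) := by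
  have : NeZero n := ⟨hn.ne'⟩
  obtain ⟨F, hF, hFw⟩ := aux_zmap w n hn h
  have hb : Function.Bijective F := by
    refine ⟨hF, fun x => ?_⟩
    obtain ⟨i, rfl⟩ := hsurj x
    exact ⟨i, hFw i⟩
  have hc : Fintype.card V = n := by
    rw [← Fintype.card_of_bijective hb, ZMod.card]
  refine ⟨n, hc ▸ hcard, ⟨RelIso.symm ⟨Equiv.ofBijective F hb, ?_⟩⟩⟩
  intro x y
  simp only [Equiv.ofBijective_apply]
  rw [hadj]
  constructor
  · rintro ⟨i, hi⟩
    have hne : Γ.Adj (F x) (F y) := (hadj _ _).2 ⟨i, hi⟩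
    rw [← hFw, ← hFw] at hi
    simp only [Sym2.eq_iff, hF.eq_iff] at hi
    simp only [cycGraph, SimpleGraph.fromRel_adj]
    refine ⟨fun h => hne.ne (by rw [h]), ?_⟩
    rcases hi with ⟨rfl, rfl⟩ | ⟨rfl, rfl⟩
    · left; push_cast; rfl
    · right; push_cast; rfl
  · simp only [cycGraph, SimpleGraph.fromRel_adj]
    rintro ⟨_, rfl | rfl⟩
    · refine ⟨x.val, ?_⟩
      rw [← hFw, ← hFw]; simp
    · refine ⟨y.val, ?_⟩
      rw [← hFw, ← hFw]; simp [Sym2.eq_swap]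

lemma aux_circ {V : Type} [Fintype V] (Γ : SimpleGraph V) (hcard : 3 ≤ Fintype.card V)
    (w : ℕ → V) (hadj : ∀ x y, Γ.Adj x y ↔ ∃ i, s(x, y) = s(w i, w (i+1)))
    (hsurj : Function.Surjective w) (m n : ℕ) (hn : 0 < n) (hnm : n ∣ m)
    (hE : ∀ i j, s(w i, w (i+1)) = s(w j, w (j+1)) → i ≡ j [MOD (2*m)])
    (h : ∀ i j, w (2*i) = w (2*j) ↔ i ≡ j [MOD n])
    (c : ℕ) (hc : ∀ i, w (2*i+1) = w (2*(c+i))) :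
    ∃ (n : ℕ) (a b : ZMod n), 5 ≤ n ∧ a ≠ 0 ∧ b ≠ 0 ∧
      ([a, -a, b, -b] : List (ZMod n)).Nodup ∧
      AddSubgroup.closure {a, b} = (⊤ : AddSubgroup (ZMod n)) ∧
      Nonempty (Γ ≃g circGraph n a b) := by
  have : NeZero n := ⟨hn.ne'⟩
  obtain ⟨F, hF, hFw⟩ := aux_zmap (fun i => w (2*i)) n hn h
  have hodd : ∀ i : ℕ, w (2*i+1) = F ((c : ZMod n) + i) := by
    intro i
    rw [hc, ← hFw]; push_cast; rfl
  have hev : ∀ i : ℕ, w (2*i) = F (i : ZMod n) := fun i => (hFw i).symm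
  have hodd' : ∀ i : ℕ, w (2*i+1+1) = F ((i : ZMod n) + 1) := by
    intro i
    have := hev (i+1)
    push_cast at this
    exact this
  have hb : Function.Bijective F := by
    refine ⟨hF, fun x => ?_⟩
    obtain ⟨i, rfl⟩ := hsurj x
    obtain ⟨k, rfl | rfl⟩ := Nat.even_or_odd' i
    · exact ⟨k, hFw k⟩
    · exact ⟨_, (hodd k).symm⟩
  have hcd : Fintype.card V = n := by
    rw [← Fintype.card_of_bijective hb, ZMod.card]
  have hadj' : ∀ x y, Γ.Adj (F x) (F y) ↔ ∃ k : ZMod n, (x = k ∧ y = c + k) ∨ (x = c + k ∧ y = k)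
      ∨ (x = c + k ∧ y = k + 1) ∨ (x = k + 1 ∧ y = c + k) := by
    intro x y
    rw [hadj]
    constructor
    · rintro ⟨i, hi⟩
      obtain ⟨k, rfl | rfl⟩ := Nat.even_or_odd' i
      · rw [hodd, hev] at hi
        simp only [Sym2.eq_iff, hF.eq_iff] at hi
        exact ⟨k, by tauto⟩
      · rw [hodd', hodd] at hi
        simp only [Sym2.eq_iff, hF.eq_iff] at hi
        exact ⟨k, by tauto⟩
    · rintro ⟨k, hk⟩
      rw [← ZMod.natCast_zmod_val k] at hk
      rcases hk with ⟨hx, hy⟩ | ⟨hx, hy⟩ | ⟨hx, hy⟩ | ⟨hx, hy⟩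
      · exact ⟨2 * k.val, by rw [hodd, hev, hx, hy]⟩
      · exact ⟨2 * k.val, by rw [hodd, hev, hx, hy, Sym2.eq_swap]⟩
      · exact ⟨2 * k.val + 1, by rw [hodd', hodd, hx, hy]⟩
      · exact ⟨2 * k.val + 1, by rw [hodd', hodd, hx, hy, Sym2.eq_swap]⟩
  have ha0 : (c : ZMod n) ≠ 0 := by
    intro h0
    have : Γ.Adj (F 0) (F c) := (hadj' _ _).2 ⟨0, by simp⟩
    exact this.ne (by rw [h0])
  have hb0 : 1 - (c : ZMod n) ≠ 0 := by
    intro h0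
    have : Γ.Adj (F c) (F 1) := (hadj' _ _).2 ⟨0, by simp⟩
    exact this.ne (by rw [sub_eq_zero.1 h0])
  have hzero : ∀ k : ℕ, 2 * k ≡ 0 [MOD 2 * m] → (k : ZMod n) = 0 := by
    intro k hk
    rw [Nat.modEq_zero_iff_dvd] at hk
    rw [ZMod.natCast_eq_zero_iff]
    exact hnm.trans (Nat.dvd_of_mul_dvd_mul_left (by norm_num) hk)
  have hpar : ∀ i j : ℕ, ¬ (2 * i ≡ 2 * j + 1 [MOD 2 * m]) := by
    intro i j hij
    have := hij.of_mul_right m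
    unfold Nat.ModEq at this
    omega
  have haa : (c : ZMod n) ≠ -c := by
    intro h0
    apply ha0
    apply hzero c
    apply hE
    have h0' : (c : ZMod n) + c = 0 := by
      nth_rewrite 1 [h0]; ring
    have h1 := hodd 0
    have h2 := hev 0
    simp only [Nat.cast_zero, mul_zero, add_zero] at h1 h2
    rw [hodd, hev, h1, h2, h0', Sym2.eq_swap]
  have hbb : 1 - (c : ZMod n) ≠ -(1 - c) := by
    intro h0
    apply hb0
    obtain ⟨j, hj⟩ : ∃ j : ℕ, (j : ZMod n) = 1 - c := ⟨(1 - (c : ZMod n)).val, by simp⟩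
    rw [← hj]
    apply hzero j
    have : 2 * j + 1 ≡ 2 * 0 + 1 [MOD 2 * m] := by
      apply hE
      rw [hodd', hodd, hodd', hodd, hj]
      have e1 : (c : ZMod n) + (1 - c) = 0 + 1 := by ring
      have e2 : 1 - (c : ZMod n) + 1 = c := by rw [h0]; ring
      rw [e1, e2, Sym2.eq_swap]; simp
    exact Nat.ModEq.add_right_cancel' 1 this
  have hab : (c : ZMod n) ≠ 1 - c := by
    intro h0
    apply hpar c 0
    apply hE
    rw [hodd, hev, hodd', hodd]
    have : (c : ZMod n) + c = 1 := by
      nth_rewrite 1 [h0]; ring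
    rw [this]; simp
  have hone : (1 : ZMod n) ≠ 0 := by
    intro h0
    have : (1 : ZMod n) = ((1 : ℕ) : ZMod n) := by simp
    rw [this, ZMod.natCast_eq_zero_iff] at h0
    have := Nat.le_of_dvd one_pos h0
    omega
  have hab' : (c : ZMod n) ≠ -(1 - c) := by
    intro h0
    apply hone
    linear_combination h0
  have hnod : ([(c : ZMod n), -c, 1 - c, -(1 - c)] : List (ZMod n)).Nodup := by
    simp only [List.nodup_cons, List.mem_cons, List.not_mem_nil, or_false, not_or,
      List.nodup_nil, not_false_eq_true, and_true]
    refine ⟨⟨haa, hab, hab'⟩, ⟨?_, ?_⟩, hbb⟩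
    · intro h0; exact hab' (by rw [← h0]; simp)
    · intro h0; exact hab (neg_injective h0)
  refine ⟨n, c, 1 - c, ?_, ha0, hb0, hnod, ?_, ?_⟩
  · have h5 : ([0, (c : ZMod n), -c, 1 - c, -(1 - c)] : List (ZMod n)).Nodup := by
      rw [List.nodup_cons]
      refine ⟨?_, hnod⟩
      simp only [List.mem_cons, List.not_mem_nil, or_false, not_or]
      refine ⟨ha0.symm, ?_, hb0.symm, ?_⟩
      · exact (neg_ne_zero.2 ha0).symm
      · exact (neg_ne_zero.2 hb0).symm
    have := h5.length_le_card
    simpa [ZMod.card] using this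
  · rw [eq_top_iff]
    intro x _
    have h1 : (1 : ZMod n) ∈ AddSubgroup.closure {(c : ZMod n), 1 - (c : ZMod n)} := by
      have := AddSubgroup.add_mem _
        (AddSubgroup.subset_closure (show (c : ZMod n) ∈ ({(c : ZMod n), 1 - (c : ZMod n)} : Set _) by simp))
        (AddSubgroup.subset_closure (show 1 - (c : ZMod n) ∈ ({(c : ZMod n), 1 - (c : ZMod n)} : Set _) by simp))
      simpa using this
    have := AddSubgroup.nsmul_mem _ h1 x.val
    simpa using this
  · refine ⟨RelIso.symm ⟨Equiv.ofBijective F hb, ?_⟩⟩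
    intro x y
    simp only [Equiv.ofBijective_apply]
    constructor
    · intro hxy
      simp only [circGraph, SimpleGraph.fromRel_adj]
      refine ⟨fun h => hxy.ne (by rw [h]), ?_⟩
      obtain ⟨k, ⟨rfl, rfl⟩ | ⟨rfl, rfl⟩ | ⟨rfl, rfl⟩ | ⟨rfl, rfl⟩⟩ := (hadj' _ _).1 hxy
      · left; left; ring
      · right; left; ring
      · left; right; ring
      · right; right; ring
    · simp only [circGraph, SimpleGraph.fromRel_adj]
      rintro ⟨_, (h1 | h1) | (h1 | h1)⟩
      · exact (hadj' _ _).2 ⟨x, Or.inl ⟨rfl, by rw [← h1]; ring⟩⟩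
      · exact (hadj' _ _).2 ⟨x - c, Or.inr (Or.inr (Or.inl ⟨by ring, by linear_combination h1⟩))⟩
      · exact (hadj' _ _).2 ⟨y, Or.inr (Or.inl ⟨by rw [← h1]; ring, rfl⟩)⟩
      · exact (hadj' _ _).2 ⟨y - c, Or.inr (Or.inr (Or.inr ⟨by linear_combination h1, by ring⟩))⟩

lemma aux_fiber (g s : ℕ) (hg : 0 < g) (hs : 0 < s) :
    ∃ Φ : ZMod g × ZMod s → ZMod (g * s), Function.Bijective Φ ∧
      ∀ k i, ((Φ (k, i)).val : ZMod g) = k := by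
  have : NeZero g := ⟨hg.ne'⟩
  have : NeZero s := ⟨hs.ne'⟩
  have : NeZero (g * s) := ⟨(Nat.mul_pos hg hs).ne'⟩
  have hval : ∀ (k : ZMod g) (i : ZMod s),
      (((k.val + g * i.val : ℕ) : ZMod (g * s))).val = k.val + g * i.val := by
    intro k i
    apply ZMod.val_natCast_of_lt
    have h1 := ZMod.val_lt k
    have h2 := ZMod.val_lt i
    calc k.val + g * i.val < g + g * i.val := by omega
      _ = g * (i.val + 1) := by ring
      _ ≤ g * s := Nat.mul_le_mul_left _ h2
  have hcast : ∀ (k : ZMod g) (i : ZMod s),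
      (((((k.val + g * i.val : ℕ) : ZMod (g * s))).val : ℕ) : ZMod g) = k := by
    intro k i
    rw [hval]; simp
  refine ⟨fun q => ((q.1.val + g * q.2.val : ℕ) : ZMod (g * s)), ?_, hcast⟩
  rw [Fintype.bijective_iff_injective_and_card]
  constructor
  · rintro ⟨k, i⟩ ⟨k', i'⟩ h
    have hk : k = k' := by
      rw [← hcast k i, ← hcast k' i']
      exact congrArg (fun z : ZMod (g * s) => (z.val : ZMod g)) h
    subst hk
    have h2 := congrArg ZMod.val h
    simp only [] at h2
    rw [hval, hval] at h2
    have h3 : i.val = i'.val := Nat.eq_of_mul_eq_mul_left hg (by omega)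
    rw [ZMod.val_injective s h3]
  · simp [ZMod.card]

lemma aux_blow {V : Type} [Fintype V] (Γ : SimpleGraph V) (hcard : 3 ≤ Fintype.card V)
    (w : ℕ → V) (hadj : ∀ x y, Γ.Adj x y ↔ ∃ i, s(x, y) = s(w i, w (i+1)))
    (hsurj : Function.Surjective w) (m α β : ℕ) (hα : 0 < α) (hβ : 0 < β)
    (hE : ∀ i j, s(w i, w (i+1)) = s(w j, w (j+1)) → i ≡ j [MOD (2*m)])
    (hev : ∀ i j, w (2*i) = w (2*j) ↔ i ≡ j [MOD α])
    (hod : ∀ i j, w (2*i+1) = w (2*j+1) ↔ i ≡ j [MOD β])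
    (hdis : ∀ i j, w (2*i) ≠ w (2*j+1)) :
    (∃ n : ℕ, 3 ≤ n ∧ Nonempty (Γ ≃g cycGraph n)) ∨
    (∃ r s t : ℕ, 2 ≤ r ∧ 1 ≤ s ∧ 1 ≤ t ∧ 1 < s * t ∧ Nat.gcd s t = 1 ∧
      Nonempty (Γ ≃g blowupCycle r s t)) := by
  have hpar : ∀ i j : ℕ, ¬ (2 * i ≡ 2 * j + 1 [MOD 2 * m]) := by
    intro i j hij
    have := hij.of_mul_right m
    unfold Nat.ModEq at this
    omega
  obtain ⟨g, hg⟩ : ∃ g, g = Nat.gcd α β := ⟨_, rfl⟩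
  have hgpos : 0 < g := hg ▸ Nat.gcd_pos_of_pos_left _ hα
  have hg2 : 2 ≤ g := by
    by_contra hlt
    have hg1 : g = 1 := by omega
    obtain ⟨i, hi1, hi2⟩ := Nat.chineseRemainder' (m := β) (n := α) (a := α - 1) (b := 0)
      (by rw [← hg, hg1]; exact Nat.modEq_one)
    apply hpar 0 i
    apply hE
    have e1 : w (2 * 0 + 1) = w (2 * i + 1) := (hod _ _).2 hi2.symm
    have e2 : w (2 * i + 1 + 1) = w (2 * 0) := by
      have : w (2 * (i + 1)) = w (2 * 0) := by
        rw [hev]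
        have h1 := hi1.add_right 1
        rw [Nat.sub_add_cancel hα] at h1
        exact h1.trans (by simp [Nat.ModEq])
      exact this
    rw [e1, e2, Sym2.eq_swap]
  obtain ⟨s, hs⟩ : g ∣ α := hg ▸ Nat.gcd_dvd_left _ _
  obtain ⟨t, ht⟩ : g ∣ β := hg ▸ Nat.gcd_dvd_right _ _
  have hs0 : 0 < s := by
    rcases Nat.eq_zero_or_pos s with h | h
    · subst h; simp at hs; omega
    · exact h
  have ht0 : 0 < t := by
    rcases Nat.eq_zero_or_pos t with h | h
    · subst h; simp at ht; omega
    · exact h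
  have hst : Nat.gcd s t = 1 := by
    have : Nat.gcd α β = g * Nat.gcd s t := by rw [hs, ht, Nat.gcd_mul_left]
    rw [← hg] at this
    exact Nat.eq_of_mul_eq_mul_left hgpos (by omega)
  by_cases h1 : s * t = 1
  · left
    have hs1 : s = 1 := Nat.eq_one_of_mul_eq_one_right h1
    have ht1 : t = 1 := Nat.eq_one_of_mul_eq_one_left h1
    subst hs1 ht1
    rw [mul_one] at hs ht
    subst hs
    subst ht
    have hmm : ∀ i j, 2 * i ≡ 2 * j [MOD 2 * β] ↔ i ≡ j [MOD β] := fun i j =>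
      ⟨fun h => Nat.ModEq.mul_left_cancel' (by norm_num) h, fun h => h.mul_left' 2⟩
    have hpar' : ∀ i j : ℕ, ¬ (2 * i ≡ 2 * j + 1 [MOD 2 * β]) := by
      intro i j hij
      have := hij.of_mul_right β
      unfold Nat.ModEq at this
      omega
    refine aux_cycle Γ hcard w hadj hsurj (2 * β) (by omega) ?_
    intro i j
    obtain ⟨k, rfl | rfl⟩ := Nat.even_or_odd' i <;> obtain ⟨l, rfl | rfl⟩ := Nat.even_or_odd' j
    · rw [hev, hmm]
    · exact ⟨fun h => (hdis _ _ h).elim, fun h => (hpar' _ _ h).elim⟩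
    · exact ⟨fun h => (hdis _ _ h.symm).elim, fun h => (hpar' _ _ h.symm).elim⟩
    · rw [hod, ← hmm]
      exact ⟨fun h => h.add_right 1, fun h => Nat.ModEq.add_right_cancel' 1 h⟩
  right
  have h1' : 1 < s * t := by
    have := Nat.mul_pos hs0 ht0
    omega
  refine ⟨g, s, t, hg2, hs0, ht0, h1', hst, ?_⟩
  obtain ⟨F, hF, hFw⟩ := aux_zmap (fun i => w (2*i)) α hα hev
  obtain ⟨H, hH, hHw⟩ := aux_zmap (fun i => w (2*i+1)) β hβ hod
  have : NeZero α := ⟨hα.ne'⟩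
  have : NeZero β := ⟨hβ.ne'⟩
  have hFH : ∀ x y, F x ≠ H y := by
    intro x y
    rw [← ZMod.natCast_zmod_val x, ← ZMod.natCast_zmod_val y, hFw, hHw]
    exact hdis _ _
  have hFF : ∀ x y, ¬ Γ.Adj (F x) (F y) := by
    intro x y h
    obtain ⟨i, hi⟩ := (hadj _ _).1 h
    obtain ⟨k, rfl | rfl⟩ := Nat.even_or_odd' i
    · rw [← hFw, ← hHw, Sym2.eq_iff] at hi
      rcases hi with ⟨h1, h2⟩ | ⟨h1, h2⟩
      · exact hFH _ _ h2
      · exact hFH _ _ h1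
    · rw [← hHw, Sym2.eq_iff] at hi
      rcases hi with ⟨h1, h2⟩ | ⟨h1, h2⟩
      · exact hFH _ _ h1
      · exact hFH _ _ h2
  have hshift : ∀ k : ℕ, w (2*k+1+1) = F ((k + 1 : ℕ) : ZMod α) := fun k => (hFw (k+1)).symm
  have hHH : ∀ x y, ¬ Γ.Adj (H x) (H y) := by
    intro x y h
    obtain ⟨i, hi⟩ := (hadj _ _).1 h
    obtain ⟨k, rfl | rfl⟩ := Nat.even_or_odd' i
    · rw [← hFw, ← hHw, Sym2.eq_iff] at hi
      rcases hi with ⟨h1, h2⟩ | ⟨h1, h2⟩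
      · exact hFH _ _ h1.symm
      · exact hFH _ _ h2.symm
    · rw [hshift, Sym2.eq_iff] at hi
      rcases hi with ⟨h1, h2⟩ | ⟨h1, h2⟩
      · exact hFH _ _ h2.symm
      · exact hFH _ _ h1.symm
  have hgα : g ∣ α := ⟨s, hs⟩
  have hgβ : g ∣ β := ⟨t, ht⟩
  have hred : ∀ (d : ℕ) [NeZero d], g ∣ d → ∀ k : ℕ, (((k : ZMod d)).val : ZMod g) = k := by
    intro d _ hd k
    rw [ZMod.natCast_eq_natCast_iff, ZMod.val_natCast]
    exact (Nat.mod_modEq k d).of_dvd hd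
  have hFHadj : ∀ x y, Γ.Adj (F x) (H y) ↔
      ((y.val : ZMod g) = x.val ∨ (y.val : ZMod g) = x.val - 1) := by
    intro x y
    rw [hadj]
    constructor
    · rintro ⟨i, hi⟩
      obtain ⟨k, rfl | rfl⟩ := Nat.even_or_odd' i
      · rw [← hFw, ← hHw, Sym2.eq_iff] at hi
        rcases hi with ⟨h1, h2⟩ | ⟨h1, h2⟩
        · left
          rw [hF h1, hH h2, hred α hgα, hred β hgβ]
        · exact (hFH _ _ h1).elim
      · rw [hshift, ← hHw, Sym2.eq_iff] at hi
        rcases hi with ⟨h1, h2⟩ | ⟨h1, h2⟩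
        · exact (hFH _ _ h1).elim
        · right
          rw [hF h1, hH h2, hred α hgα, hred β hgβ]
          push_cast; ring
    · rintro (h | h)
      · rw [ZMod.natCast_eq_natCast_iff] at h
        obtain ⟨i, hi1, hi2⟩ := Nat.chineseRemainder' (m := β) (n := α) (a := x.val) (b := y.val)
          (by rw [← hg]; exact h.symm)
        refine ⟨2 * i, ?_⟩
        rw [← hFw, ← hHw]
        rw [← ZMod.natCast_eq_natCast_iff] at hi1 hi2
        rw [hi1, hi2]; simp
      · have h' : ((y.val + 1 : ℕ) : ZMod g) = x.val := by push_cast; rw [h]; ring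
        rw [ZMod.natCast_eq_natCast_iff] at h'
        obtain ⟨i, hi1, hi2⟩ := Nat.chineseRemainder' (m := β) (n := α) (a := x.val + (α - 1))
          (b := y.val) (by
            rw [← hg]
            apply Nat.ModEq.add_right_cancel' 1
            refine Nat.ModEq.trans ?_ h'.symm
            rw [add_assoc, Nat.sub_add_cancel hα]
            have : α ≡ 0 [MOD g] := (Nat.modEq_zero_iff_dvd).2 hgα
            simpa using this.add_left x.val)
        refine ⟨2 * i + 1, ?_⟩
        rw [hshift, ← hHw, Sym2.eq_swap]
        have hi1' : i + 1 ≡ x.val [MOD α] := by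
          have := hi1.add_right 1
          rw [add_assoc, Nat.sub_add_cancel hα] at this
          exact this.trans (by simp)
        rw [← ZMod.natCast_eq_natCast_iff] at hi1' hi2
        rw [hi1', hi2]; simp
  clear hred hg hev hod
  subst hs ht
  obtain ⟨Φ, hΦ, hΦv⟩ := aux_fiber g s hgpos hs0
  obtain ⟨Ψ, hΨ, hΨv⟩ := aux_fiber g t hgpos ht0
  let T : (ZMod g × ZMod s) ⊕ (ZMod g × ZMod t) → V := Sum.elim (fun q => F (Φ q)) (fun q => H (Ψ q))
  have hT : Function.Bijective T := by
    constructor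
    · rintro (a | a) (b | b) hab
      · exact congrArg _ (hΦ.1 (hF hab))
      · exact (hFH _ _ hab).elim
      · exact (hFH _ _ hab.symm).elim
      · exact congrArg _ (hΨ.1 (hH hab))
    · intro x
      obtain ⟨i, rfl⟩ := hsurj x
      obtain ⟨k, rfl | rfl⟩ := Nat.even_or_odd' i
      · obtain ⟨q, hq⟩ := hΦ.2 (k : ZMod (g * s))
        exact ⟨Sum.inl q, by simp only [T, Sum.elim_inl]; rw [hq, hFw]⟩
      · obtain ⟨q, hq⟩ := hΨ.2 (k : ZMod (g * t))
        exact ⟨Sum.inr q, by simp only [T, Sum.elim_inr]; rw [hq, hHw]⟩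
  refine ⟨RelIso.symm ⟨Equiv.ofBijective T hT, ?_⟩⟩
  rintro (⟨k, i⟩ | ⟨k, i⟩) (⟨k', j⟩ | ⟨k', j⟩)
  · simp [T, blowupCycle, hFF]
  · simp only [Equiv.ofBijective_apply, T, Sum.elim_inl, Sum.elim_inr]
    rw [hFHadj, hΦv, hΨv]
    simp [blowupCycle]
  · simp only [Equiv.ofBijective_apply, T, Sum.elim_inl, Sum.elim_inr]
    rw [SimpleGraph.adj_comm, hFHadj, hΦv, hΨv]
    simp [blowupCycle]
  · simp [T, blowupCycle, hHH]

lemma aux_core {V : Type} [Fintype V] (Γ : SimpleGraph V) (hcard : 3 ≤ Fintype.card V)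
    (w : ℕ → V) (l : ℕ) (hl : 0 < l) (hper : ∀ i, w (i + l) = w i)
    (hadj : ∀ x y, Γ.Adj x y ↔ ∃ i, s(x, y) = s(w i, w (i+1)))
    (hsurj : Function.Surjective w)
    (hE : ∀ i j, s(w i, w (i+1)) = s(w j, w (j+1)) → i ≡ j [MOD l])
    (σ : V → V) (hinj : Function.Injective σ) (hσ : ∀ i, σ (w i) = w (i + 2)) :
    (∃ n : ℕ, 3 ≤ n ∧ Nonempty (Γ ≃g cycGraph n)) ∨
    (∃ r s t : ℕ, 2 ≤ r ∧ 1 ≤ s ∧ 1 ≤ t ∧ 1 < s * t ∧ Nat.gcd s t = 1 ∧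
      Nonempty (Γ ≃g blowupCycle r s t)) ∨
    (∃ (n : ℕ) (a b : ZMod n), 5 ≤ n ∧ a ≠ 0 ∧ b ≠ 0 ∧
      ([a, -a, b, -b] : List (ZMod n)).Nodup ∧
      AddSubgroup.closure {a, b} = (⊤ : AddSubgroup (ZMod n)) ∧
      Nonempty (Γ ≃g circGraph n a b)) := by
  have hit : ∀ k i, σ^[k] (w i) = w (i + 2 * k) := by
    intro k
    induction k with
    | zero => intro i; rfl
    | succ k ih => intro i; rw [Function.iterate_succ_apply', ih, hσ]; congr 1
  obtain ⟨m, rfl | rfl⟩ := Nat.even_or_odd' l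
  · have hm : 0 < m := by omega
    obtain ⟨α, hα, hαm, hev⟩ := aux_orbit σ hinj (fun i => w (2 * i)) (fun i => hσ _) m hm
      (by simpa using hper 0)
    obtain ⟨β, hβ, hβm, hod⟩ := aux_orbit σ hinj (fun i => w (2 * i + 1)) (fun i => hσ _) m hm
      (by have := hper 1; rw [add_comm] at this; simpa using this)
    by_cases hc : ∃ i j, w (2 * i) = w (2 * j + 1)
    · right; right
      obtain ⟨i, j, hij⟩ := hc
      have hper' : ∀ k i, w (i + 2 * m * k) = w i := by
        intro k
        induction k with
        | zero => intro i; rfl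
        | succ k ih => intro i; rw [Nat.mul_succ, ← add_assoc, hper, ih]
      have hk : ∃ k, k + j = m * j := ⟨m * j - j, Nat.sub_add_cancel (Nat.le_mul_of_pos_left j hm)⟩
      obtain ⟨k, hk⟩ := hk
      refine aux_circ Γ hcard w hadj hsurj m α hα hαm hE hev (i + k) ?_
      intro q
      have h1 := congrArg σ^[k + q] hij
      rw [hit, hit] at h1
      have e : 2 * j + 1 + 2 * (k + q) = (2 * q + 1) + 2 * m * j := by
        have : 2 * m * j = 2 * (k + j) := by rw [hk]; ring
        omega
      rw [e, hper'] at h1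
      rw [← h1]; congr 1; ring
    · push Not at hc
      rcases aux_blow Γ hcard w hadj hsurj m α β hα hβ hE hev hod hc with h | h
      · exact Or.inl h
      · exact Or.inr (Or.inl h)
  · left
    obtain ⟨n, hn, _, h⟩ := aux_orbit σ^[m + 1] (hinj.iterate _) w
      (fun i => by
        rw [hit]
        have : i + 2 * (m + 1) = (i + 1) + (2 * m + 1) := by ring
        rw [this, hper]) (2 * m + 1) (by omega) (by simpa using hper 0)
    exact aux_cycle Γ hcard w hadj hsurj n hn h

theorem stmt17 {V : Type} [Fintype V] [DecidableEq V] (Γ : SimpleGraph V)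
    (hconn : Γ.Connected) (hcard : 3 ≤ Fintype.card V)
    (v : V) (p : Γ.Walk v v) (hp : p.IsEulerian)
    (σ : Γ ≃g Γ)
    (hσ : ∀ i : Fin p.edges.length,
      Sym2.map ⇑σ (p.edges.get i) =
        p.edges.get ⟨((i : ℕ) + 2) % p.edges.length, Nat.mod_lt _ i.pos⟩) :
    (∃ n : ℕ, 3 ≤ n ∧ Nonempty (Γ ≃g cycGraph n)) ∨
    (∃ r s t : ℕ, 2 ≤ r ∧ 1 ≤ s ∧ 1 ≤ t ∧ 1 < s * t ∧ Nat.gcd s t = 1 ∧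
      Nonempty (Γ ≃g blowupCycle r s t)) ∨
    (∃ (n : ℕ) (a b : ZMod n), 5 ≤ n ∧ a ≠ 0 ∧ b ≠ 0 ∧
      ([a, -a, b, -b] : List (ZMod n)).Nodup ∧
      AddSubgroup.closure {a, b} = (⊤ : AddSubgroup (ZMod n)) ∧
      Nonempty (Γ ≃g circGraph n a b)) := by
  have : Nontrivial V := Fintype.one_lt_card_iff_nontrivial.1 (by omega)
  obtain ⟨l, hl⟩ : ∃ l, l = p.length := ⟨_, rfl⟩
  have hlen : p.edges.length = l := by rw [SimpleGraph.Walk.length_edges, hl]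
  have hl0 : 0 < l := by
    obtain ⟨u, hu⟩ := hconn.preconnected.exists_adj_of_nontrivial v
    have := (hp.mem_edges_iff (e := s(v, u))).2 hu
    rw [← hlen]
    exact List.length_pos_of_mem this
  obtain ⟨w, hw⟩ : ∃ w : ℕ → V, w = fun i => p.getVert (i % l) := ⟨_, rfl⟩
  have hper : ∀ i, w (i + l) = w i := by
    intro i; simp [hw]
  have hw1 : ∀ i, w (i + 1) = p.getVert (i % l + 1) := by
    intro i
    simp only [hw]
    rw [Nat.add_mod, ]
    have hlt := Nat.mod_lt i hl0
    rcases Nat.lt_or_ge (i % l + 1) l with h | h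
    · congr 1
      rw [← Nat.mod_eq_of_lt h]
      simp
    · have h1 : i % l + 1 = l := by omega
      have h2 : (i % l + 1 % l) % l = 0 := by
        rw [Nat.add_mod_mod, h1, Nat.mod_self]
      rw [h2, h1, hl]; simp
  have hedge : ∀ i (hi : i % l < p.edges.length), p.edges[i % l] = s(w i, w (i + 1)) := by
    intro i hi
    rw [hw1, SimpleGraph.Walk.getElem_edges]
    simp only [hw]
  have hlt : ∀ i, i % l < p.edges.length := fun i => by
    rw [hlen]; exact Nat.mod_lt i hl0
  have hadj : ∀ x y, Γ.Adj x y ↔ ∃ i, s(x, y) = s(w i, w (i+1)) := by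
    intro x y
    rw [← SimpleGraph.mem_edgeSet, ← hp.mem_edges_iff]
    constructor
    · intro h
      obtain ⟨i, hi, h⟩ := List.getElem_of_mem h
      refine ⟨i, ?_⟩
      rw [← hedge i (hlt i), ← h]
      congr 1
      exact (Nat.mod_eq_of_lt (hlen ▸ hi)).symm
    · rintro ⟨i, hi⟩
      rw [hi, ← hedge i (hlt i)]
      exact List.getElem_mem _
  have hsurj : Function.Surjective w := by
    intro x
    obtain ⟨u, hu⟩ := hconn.preconnected.exists_adj_of_nontrivial x
    obtain ⟨i, hi⟩ := (hadj _ _).1 hu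
    rw [Sym2.eq_iff] at hi
    rcases hi with ⟨h, _⟩ | ⟨h, _⟩
    · exact ⟨_, h.symm⟩
    · exact ⟨_, h.symm⟩
  have hE : ∀ i j, s(w i, w (i+1)) = s(w j, w (j+1)) → i ≡ j [MOD l] := by
    intro i j h
    rw [← hedge i (hlt i), ← hedge j (hlt j)] at h
    exact (hp.isTrail.edges_nodup.getElem_inj_iff).1 h
  have hl1 : l ≠ 1 := by
    intro h
    have h1 : Γ.Adj (w 0) (w 1) := (hadj _ _).2 ⟨0, rfl⟩
    have := hper 0
    rw [h] at this
    exact h1.ne this.symm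
  have hσe : ∀ i, s(σ (w i), σ (w (i+1))) = s(w (i+2), w (i+3)) := by
    intro i
    have h := hσ ⟨i % l, hlt i⟩
    have e1 : p.edges.get ⟨i % l, hlt i⟩ = s(w i, w (i+1)) := hedge i (hlt i)
    have e2 : ∀ h', p.edges.get ⟨(i % l + 2) % p.edges.length, h'⟩ = s(w (i+2), w (i+3)) := by
      intro h'
      rw [← hedge (i+2) (hlt _)]
      simp only [List.get_eq_getElem]
      congr 1
      rw [hlen]; simp
    rw [e1, e2] at h
    exact h
  have hσ1 : ∀ i, σ (w (i+1)) = w (i+3) := by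
    intro i
    have h1 := hσe i
    have h2 := hσe (i+1)
    rw [Sym2.eq_iff] at h1 h2
    rcases h1 with ⟨_, h1⟩ | ⟨_, h1⟩
    · exact h1
    · rcases h2 with ⟨h2, _⟩ | ⟨h2, _⟩
      · exact h2
      · exfalso
        have h3 : w (i+2) = w (i+4) := h1.symm.trans h2
        have h4 := hE (i+2) (i+3) (by
          show s(w (i+2), w (i+3)) = s(w (i+3), w (i+4))
          rw [h3, Sym2.eq_swap])
        have h5 : 0 ≡ 1 [MOD l] := Nat.ModEq.add_left_cancel' (i+2) h4
        have h6 := (Nat.modEq_zero_iff_dvd).1 h5.symm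
        exact hl1 (Nat.dvd_one.1 h6)
  refine aux_core Γ hcard w l hl0 hper hadj hsurj hE σ σ.injective ?_
  intro i
  cases i with
  | zero =>
    have h := hσ1 (l - 1)
    rw [Nat.sub_add_cancel hl0] at h
    have e : l - 1 + 3 = 2 + l := by omega
    rw [e, hper] at h
    rw [← h, ← hper 0, zero_add]
  | succ k => exact hσ1 k
end

section
/- Let Γ be a finite connected simple graph with at least 3 vertices, and let g be an automorphism of Γ such that the cyclic group generated by g acts transitively on the vertex set of Γ and acts freely on the edge set of Γ with exactly two orbits. Then there exist n ≥ 5 and a, b : ZMod n such that a, −a, b, −b are four pairwise distinct nonzero elements, the additive subgroup of ZMod n generated by {a, b} is all of ZMod n, and Γ is isomorphic to Circ(n,{a,−a,b,−b}). -/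
theorem aux_equiv {V : Type} [Fintype V] (Γ : SimpleGraph V)
    (hcard : 3 ≤ Fintype.card V)
    (g : Γ ≃g Γ)
    (hvtrans : ∀ v w : V, ∃ k : ℤ, (g ^ k) v = w) :
    ∃ (n : ℕ) (F : ZMod n ≃ V), (∀ (k : ℤ) (x : ZMod n), (g ^ k) (F x) = F (k + x)) ∧
      (∀ k : ℤ, g ^ k = 1 → (k : ZMod n) = 0) ∧ n ≠ 0 := by
  have hne : Nonempty V := Fintype.card_pos_iff.mp (by omega)
  obtain ⟨v0⟩ := hne
  have hmul : ∀ (k l : ℤ) (v : V), (g ^ k) ((g ^ l) v) = (g ^ (k + l)) v := by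
    intro k l v
    rw [zpow_add]; rfl
  have hfix : ∀ k : ℤ, (g ^ k) v0 = v0 → g ^ k = 1 := by
    intro k hk
    apply RelIso.ext
    intro v
    obtain ⟨l, rfl⟩ := hvtrans v0 v
    rw [hmul, add_comm, ← hmul, hk]; rfl
  have hone : ∀ k : ℤ, g ^ k = 1 ↔ (k : ZMod (orderOf g)) = 0 := by
    intro k
    rw [ZMod.intCast_zmod_eq_zero_iff_dvd, orderOf_dvd_iff_zpow_eq_one] 
  have heq : ∀ k l : ℤ, (g ^ k) v0 = (g ^ l) v0 ↔ (k : ZMod (orderOf g)) = l := by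
    intro k l
    rw [← sub_eq_zero (a := (k : ZMod (orderOf g))), ← Int.cast_sub, ← hone]
    constructor
    · intro h
      apply hfix
      rw [sub_eq_neg_add, ← hmul, h, hmul]; simp
    · intro h
      have : k = l + (k - l) := by ring
      rw [this, ← hmul, h]; rfl
  have hsurj := ZMod.intCast_surjective (n := orderOf g)
  choose c hc using hsurj
  refine ⟨orderOf g, Equiv.ofBijective (fun x => (g ^ (c x)) v0) ⟨?_, ?_⟩, ?_, ?_, ?_⟩
  · intro x y h
    have := (heq _ _).1 h
    rwa [hc, hc] at this
  · intro v
    obtain ⟨l, rfl⟩ := hvtrans v0 v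
    exact ⟨l, (heq _ _).2 (hc _)⟩
  · intro k x
    change (g ^ k) ((g ^ (c x)) v0) = (g ^ (c (k + x))) v0
    rw [hmul, heq, hc, Int.cast_add, hc]
  · intro k; exact (hone k).1
  · intro h0
    rw [h0] at heq
    have : Function.Injective (fun k : ℤ => (g ^ k) v0) := by
      intro k l h
      simpa using (heq k l).1 h
    exact not_injective_infinite_finite _ this

theorem stmt18 {V : Type} [Fintype V] (Γ : SimpleGraph V)
    (hconn : Γ.Connected) (hcard : 3 ≤ Fintype.card V)
    (g : Γ ≃g Γ)
    (hvtrans : ∀ v w : V, ∃ k : ℤ, (g ^ k) v = w)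
    (hfree : ∀ k : ℤ, ∀ e ∈ Γ.edgeSet, Sym2.map ⇑(g ^ k) e = e → g ^ k = 1)
    (horb : ∃ e₁ ∈ Γ.edgeSet, ∃ e₂ ∈ Γ.edgeSet,
      ¬ (∃ k : ℤ, Sym2.map ⇑(g ^ k) e₁ = e₂) ∧
      ∀ e ∈ Γ.edgeSet,
        (∃ k : ℤ, Sym2.map ⇑(g ^ k) e₁ = e) ∨ (∃ k : ℤ, Sym2.map ⇑(g ^ k) e₂ = e)) :
    ∃ (n : ℕ) (a b : ZMod n), 5 ≤ n ∧ a ≠ 0 ∧ b ≠ 0 ∧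
      ([a, -a, b, -b] : List (ZMod n)).Nodup ∧
      AddSubgroup.closure {a, b} = (⊤ : AddSubgroup (ZMod n)) ∧
      Nonempty (Γ ≃g circGraph n a b) := by
  obtain ⟨n, F, hF, hone, hn⟩ := aux_equiv Γ hcard g hvtrans
  obtain ⟨e₁, he₁, e₂, he₂, hno, hall⟩ := horb
  induction e₁ using Sym2.ind with | _ u₁ v₁ =>
  induction e₂ using Sym2.ind with | _ u₂ v₂ =>
  obtain ⟨p, rfl⟩ := F.surjective u₁
  obtain ⟨q, rfl⟩ := F.surjective v₁
  obtain ⟨r, rfl⟩ := F.surjective u₂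
  obtain ⟨s, rfl⟩ := F.surjective v₂
  have hadjk : ∀ (k x y : ZMod n), Γ.Adj (F x) (F y) → Γ.Adj (F (k + x)) (F (k + y)) := by
    intro k x y h
    obtain ⟨k, rfl⟩ := ZMod.intCast_surjective k
    rw [← hF, ← hF]
    exact (g ^ k).map_rel_iff.2 h
  rw [SimpleGraph.mem_edgeSet] at he₁ he₂
  have hself : ∀ x y, Γ.Adj (F x) (F y) → y - x ≠ 0 ∧ y - x ≠ -(y - x) := by
    intro x y h
    have h0 : y - x ≠ 0 := by
      intro h'
      rw [sub_eq_zero] at h'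
      subst h'
      exact h.ne rfl
    refine ⟨h0, fun h2 => h0 ?_⟩
    obtain ⟨k, hk⟩ := ZMod.intCast_surjective (y - x)
    rw [← hk]
    apply hone
    apply hfree k s(F x, F y) h
    rw [Sym2.map_mk, hF, hF, Sym2.eq_swap, hk]
    congr 2
    · rw [h2]; ring_nf
    · ring_nf
  have hab : q - p ≠ s - r := by
    intro h
    apply hno
    obtain ⟨k, hk⟩ := ZMod.intCast_surjective (r - p)
    refine ⟨k, ?_⟩
    rw [Sym2.map_mk, hF, hF, hk]
    congr 2
    · ring_nf
    · linear_combination h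
  have hab' : q - p ≠ -(s - r) := by
    intro h
    apply hno
    obtain ⟨k, hk⟩ := ZMod.intCast_surjective (s - p)
    refine ⟨k, ?_⟩
    rw [Sym2.map_mk, hF, hF, hk, Sym2.eq_swap]
    congr 2
    · linear_combination h
    · ring_nf
  have hadj : ∀ x y, Γ.Adj (F x) (F y) ↔
      ((y - x = q - p ∨ y - x = s - r) ∨ (x - y = q - p ∨ x - y = s - r)) := by
    have back : ∀ x y u v : ZMod n, y - x = v - u → Γ.Adj (F u) (F v) → Γ.Adj (F x) (F y) := by
      intro x y u v h h'
      have := hadjk (x - u) u v h'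
      have e1 : x - u + u = x := by ring
      have e2 : x - u + v = y := by linear_combination -h
      rwa [e1, e2] at this
    intro x y
    constructor
    · intro h
      have key : ∀ (k : ℤ) (u v : ZMod n), Sym2.map ⇑(g ^ k) s(F u, F v) = s(F x, F y) →
          y - x = v - u ∨ x - y = v - u := by
        intro k u v h
        rw [Sym2.map_mk, hF, hF, Sym2.eq_iff] at h
        simp only [F.injective.eq_iff] at h
        rcases h with ⟨h1, h2⟩ | ⟨h1, h2⟩
        · left; rw [← h1, ← h2]; ring
        · right; rw [← h1, ← h2]; ring
      rcases hall s(F x, F y) h with ⟨k, hk⟩ | ⟨k, hk⟩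
      · have := key k _ _ hk; tauto
      · have := key k _ _ hk; tauto
    · rintro ((h | h) | (h | h))
      · exact back _ _ _ _ h he₁
      · exact back _ _ _ _ h he₂
      · exact (back _ _ _ _ h he₁).symm
      · exact (back _ _ _ _ h he₂).symm
  obtain ⟨ha0, ha2⟩ := hself _ _ he₁
  obtain ⟨hb0, hb2⟩ := hself _ _ he₂
  generalize q - p = a at *
  generalize s - r = b at *
  have hnod : ([0, a, -a, b, -b] : List (ZMod n)).Nodup := by
    have h1 : -a ≠ b := fun h => hab' (by rw [← h, neg_neg])
    have h2 : -a ≠ -b := fun h => hab (neg_injective h)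
    simp [ha0, hb0, ha2, hb2, hab, hab', h1, Ne.symm ha0, Ne.symm hb0]
  refine ⟨n, a, b, ?_, ha0, hb0, hnod.of_cons, ?_, ⟨⟨F.symm, ?_⟩⟩⟩
  · have : NeZero n := ⟨hn⟩
    have := hnod.length_le_card
    simpa [ZMod.card] using this
  · rw [eq_top_iff]
    intro x _
    have hw : ∀ v w : V, Γ.Walk v w → F.symm w - F.symm v ∈ AddSubgroup.closure {a, b} := by
      intro v w W
      induction W with
      | nil => simp
      | @cons u v w h W ih =>
        have h1 : F.symm v - F.symm u ∈ AddSubgroup.closure {a, b} := by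
          have ma : a ∈ AddSubgroup.closure {a, b} := AddSubgroup.subset_closure (by simp)
          have mb : b ∈ AddSubgroup.closure {a, b} := AddSubgroup.subset_closure (by simp)
          have h' := (hadj (F.symm u) (F.symm v)).1 (by simpa using h)
          rcases h' with ((h | h) | (h | h))
          · rwa [h]
          · rwa [h]
          · rw [← neg_sub, h]; exact neg_mem ma
          · rw [← neg_sub, h]; exact neg_mem mb
        have := add_mem ih h1
        simpa using this
    obtain ⟨W⟩ := hconn.preconnected (F 0) (F x)
    simpa using hw _ _ W
  · intro u v
    obtain ⟨x, rfl⟩ := F.surjective u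
    obtain ⟨y, rfl⟩ := F.surjective v
    rw [hadj]
    simp only [Equiv.symm_apply_apply, circGraph, SimpleGraph.fromRel_adj]
    constructor
    · exact fun h => h.2
    · intro h
      refine ⟨?_, h⟩
      rintro rfl
      simp [ha0.symm, hb0.symm] at h
end

section
/- Let r, s ≥ 1 and u ≥ 2 with s·u ≥ 3 and Nat.gcd r u = 1, and let Γ be the simple graph on (ZMod (s·r·u)) ⊕ (ZMod u) in which inl v and inl v' are adjacent if and only if v' = v + r or v = v' + r, and inl v is adjacent to inr i if and only if the image of v under the natural ring homomorphism ZMod (s·r·u) → ZMod u equals i, with no other adjacencies. Then Γ is connected, the map g with g(inl v) = inl (v+1) and g(inr i) = inr (i+1) is an automorphism of Γ of order s·r·u, and the cyclic group generated by g has exactly two orbits on the vertex set and acts freely on the edge set of Γ with exactly two orbits, each of size s·r·u. -/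
/-- The graph `r·C_{su} + u·K_{sr,1}` on `ZMod (s*r*u) ⊕ ZMod u`: `inl v` is adjacent to
`inl v'` iff `v' = v + r` or `v = v' + r`, and `inl v` is adjacent to `inr i` iff
`v ≡ i (mod u)`; there are no other adjacencies. -/
def cycleStarGraph (s r u : ℕ) : SimpleGraph (ZMod (s * r * u) ⊕ ZMod u) :=
  SimpleGraph.fromRel (fun x y =>
    (∃ v : ZMod (s * r * u), x = Sum.inl v ∧ y = Sum.inl (v + (r : ZMod (s * r * u)))) ∨
    (∃ (v : ZMod (s * r * u)) (i : ZMod u),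
      x = Sum.inl v ∧ y = Sum.inr i ∧
        ZMod.castHom (⟨s * r, by ring⟩ : u ∣ s * r * u) (ZMod u) v = i))

section helpers
variable {s r u : ℕ}

lemma csg_adj_iff (x y : ZMod (s * r * u) ⊕ ZMod u) :
    (cycleStarGraph s r u).Adj x y ↔ x ≠ y ∧
    (((∃ v : ZMod (s * r * u), x = Sum.inl v ∧ y = Sum.inl (v + (r : ZMod (s * r * u)))) ∨
    (∃ (v : ZMod (s * r * u)) (i : ZMod u), x = Sum.inl v ∧ y = Sum.inr i ∧
        ZMod.castHom (⟨s * r, by ring⟩ : u ∣ s * r * u) (ZMod u) v = i)) ∨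
    ((∃ v : ZMod (s * r * u), y = Sum.inl v ∧ x = Sum.inl (v + (r : ZMod (s * r * u)))) ∨
    (∃ (v : ZMod (s * r * u)) (i : ZMod u), y = Sum.inl v ∧ x = Sum.inr i ∧
        ZMod.castHom (⟨s * r, by ring⟩ : u ∣ s * r * u) (ZMod u) v = i))) := by
  unfold cycleStarGraph
  exact SimpleGraph.fromRel_adj _ _ _

lemma csg_two_r_ne (hr : 1 ≤ r) (hsu : 3 ≤ s * u) :
    (r : ZMod (s * r * u)) + r ≠ 0 := by
  intro h
  have h2 : ((2 * r : ℕ) : ZMod (s * r * u)) = 0 := by push_cast; rw [two_mul]; exact h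
  rw [ZMod.natCast_eq_zero_iff] at h2
  have := Nat.le_of_dvd (by omega) h2
  nlinarith

lemma csg_r_ne (hr : 1 ≤ r) (hsu : 3 ≤ s * u) : (r : ZMod (s * r * u)) ≠ 0 := by
  intro h
  exact csg_two_r_ne hr hsu (by rw [h, add_zero])

lemma csg_mem_edge (hr : 1 ≤ r) (hsu : 3 ≤ s * u) (e : Sym2 (ZMod (s * r * u) ⊕ ZMod u)) :
    e ∈ (cycleStarGraph s r u).edgeSet ↔
      (∃ v : ZMod (s * r * u), e = s(Sum.inl v, Sum.inl (v + (r : ZMod (s * r * u))))) ∨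
      (∃ v : ZMod (s * r * u), e = s(Sum.inl v, Sum.inr
        (ZMod.castHom (⟨s * r, by ring⟩ : u ∣ s * r * u) (ZMod u) v))) := by
  constructor
  · induction e using Sym2.ind with
    | _ x y =>
      rw [SimpleGraph.mem_edgeSet, csg_adj_iff]
      rintro ⟨-, (⟨v, rfl, rfl⟩ | ⟨v, i, rfl, rfl, rfl⟩) | (⟨v, rfl, rfl⟩ | ⟨v, i, rfl, rfl, rfl⟩)⟩
      · exact Or.inl ⟨v, rfl⟩
      · exact Or.inr ⟨v, rfl⟩
      · exact Or.inl ⟨v, Sym2.eq_swap⟩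
      · exact Or.inr ⟨v, Sym2.eq_swap⟩
  · rintro (⟨v, rfl⟩ | ⟨v, rfl⟩)
    · rw [SimpleGraph.mem_edgeSet, csg_adj_iff]
      refine ⟨?_, Or.inl (Or.inl ⟨v, rfl, rfl⟩)⟩
      intro h
      exact csg_r_ne hr hsu (by simpa using h)
    · rw [SimpleGraph.mem_edgeSet, csg_adj_iff]
      exact ⟨by simp, Or.inl (Or.inr ⟨v, _, rfl, rfl, rfl⟩)⟩

lemma csg_connected (hr : 1 ≤ r) (hsu : 3 ≤ s * u) (hgcd : Nat.gcd r u = 1) :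
    (cycleStarGraph s r u).Connected := by
  have hstar : ∀ v : ZMod (s * r * u), (cycleStarGraph s r u).Adj (Sum.inl v) (Sum.inr
        (ZMod.castHom (⟨s * r, by ring⟩ : u ∣ s * r * u) (ZMod u) v)) := fun v =>
    (csg_mem_edge hr hsu s(_, _)).2 (Or.inr ⟨v, rfl⟩)
  have hcyc : ∀ v : ZMod (s * r * u), (cycleStarGraph s r u).Adj (Sum.inl v)
      (Sum.inl (v + (r : ZMod (s * r * u)))) := fun v =>
    (csg_mem_edge hr hsu s(_, _)).2 (Or.inl ⟨v, rfl⟩)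
  let H : AddSubgroup (ZMod (s * r * u)) :=
    { carrier := {a | ∀ v, (cycleStarGraph s r u).Reachable (Sum.inl v) (Sum.inl (v + a))}
      zero_mem' := fun v => by rw [add_zero]
      add_mem' := fun {a b} ha hb v => by
        rw [← add_assoc]; exact (ha v).trans (hb _)
      neg_mem' := fun {a} ha v => by
        have := (ha (v + -a)).symm
        rwa [neg_add_cancel_right] at this }
  have hrH : (r : ZMod (s * r * u)) ∈ H := fun v => (hcyc v).reachable
  have huH : (u : ZMod (s * r * u)) ∈ H := fun v => by
    have h1 := hstar v
    have h2 := hstar (v + u)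
    rw [map_add, map_natCast, ZMod.natCast_self, add_zero] at h2
    exact h1.reachable.trans h2.symm.reachable
  have h1 : (1 : ZMod (s * r * u)) ∈ H := by
    have hb := Nat.gcd_eq_gcd_ab r u
    rw [hgcd] at hb
    have : (1 : ZMod (s * r * u)) = r.gcdA u • (r : ZMod (s * r * u)) +
        r.gcdB u • (u : ZMod (s * r * u)) := by
      have := congrArg (Int.cast : ℤ → ZMod (s * r * u)) hb
      push_cast at this
      rw [zsmul_eq_mul, zsmul_eq_mul, this]; ring
    rw [this]
    exact H.add_mem (H.zsmul_mem hrH _) (H.zsmul_mem huH _)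
  have hall : ∀ a, a ∈ H := fun a => by
    obtain ⟨k, rfl⟩ := ZMod.intCast_surjective a
    have := H.zsmul_mem h1 k
    rwa [zsmul_one] at this
  have h0 : ∀ x, (cycleStarGraph s r u).Reachable (Sum.inl 0) x := by
    rintro (v | i)
    · have := hall v 0
      rwa [zero_add] at this
    · obtain ⟨v, rfl⟩ := ZMod.castHom_surjective (⟨s * r, by ring⟩ : u ∣ s * r * u) i
      have := hall v 0
      rw [zero_add] at this
      exact this.trans (hstar v).reachable
  exact { preconnected := fun x y => (h0 x).symm.trans (h0 y), nonempty := ⟨Sum.inl 0⟩ }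

/-- The shift automorphism. -/
def csgShift (s r u : ℕ) : cycleStarGraph s r u ≃g cycleStarGraph s r u where
  toEquiv := Equiv.sumCongr (Equiv.addRight 1) (Equiv.addRight 1)
  map_rel_iff' := by
    rintro (a | a) (b | b)
    · simp only [csg_adj_iff]
      simp [add_right_comm _ (1 : ZMod (s * r * u))]
    · simp only [csg_adj_iff]
      simp
    · simp only [csg_adj_iff]
      simp
    · simp only [csg_adj_iff]
      simp

lemma csgShift_inl (v : ZMod (s * r * u)) :
    csgShift s r u (Sum.inl v) = Sum.inl (v + 1) := rfl

lemma csgShift_inr (v : ZMod u) :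
    csgShift s r u (Sum.inr v) = Sum.inr (v + 1) := rfl

lemma csgShift_inv_inl (v : ZMod (s * r * u)) :
    (csgShift s r u)⁻¹ (Sum.inl v) = Sum.inl (v - 1) := by
  apply (csgShift s r u).injective
  rw [RelIso.apply_inv_self, csgShift_inl, sub_add_cancel]

lemma csgShift_inv_inr (v : ZMod u) :
    (csgShift s r u)⁻¹ (Sum.inr v) = Sum.inr (v - 1) := by
  apply (csgShift s r u).injective
  rw [RelIso.apply_inv_self, csgShift_inr, sub_add_cancel]

lemma csgShift_zpow_inl (k : ℤ) (v : ZMod (s * r * u)) :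
    (csgShift s r u ^ k) (Sum.inl v) = Sum.inl (v + k) := by
  induction k using Int.induction_on generalizing v with
  | zero => simp
  | succ k ih =>
    rw [zpow_add_one, RelIso.mul_apply, csgShift_inl, ih]
    push_cast; congr 1; ring
  | pred k ih =>
    rw [zpow_sub_one, RelIso.mul_apply, csgShift_inv_inl, ih]
    push_cast; congr 1; ring

lemma csgShift_zpow_inr (k : ℤ) (v : ZMod u) :
    (csgShift s r u ^ k) (Sum.inr v) = Sum.inr (v + k) := by
  induction k using Int.induction_on generalizing v with
  | zero => simp
  | succ k ih =>
    rw [zpow_add_one, RelIso.mul_apply, csgShift_inr, ih]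
    push_cast; congr 1; ring
  | pred k ih =>
    rw [zpow_sub_one, RelIso.mul_apply, csgShift_inv_inr, ih]
    push_cast; congr 1; ring

lemma csgShift_zpow_eq_one (k : ℤ) :
    csgShift s r u ^ k = 1 ↔ (k : ZMod (s * r * u)) = 0 := by
  constructor
  · intro h
    have := csgShift_zpow_inl (s := s) (r := r) (u := u) k 0
    rw [h] at this
    simpa using this.symm
  · intro h
    have h' : (k : ZMod u) = 0 := by
      have := congrArg (ZMod.castHom (⟨s * r, by ring⟩ : u ∣ s * r * u) (ZMod u)) h
      simpa using this
    ext x : 1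
    rcases x with v | i
    · rw [csgShift_zpow_inl, h, add_zero]; rfl
    · rw [csgShift_zpow_inr, h', add_zero]; rfl

lemma csgShift_order : orderOf (csgShift s r u) = s * r * u := by
  apply Nat.dvd_antisymm
  · apply orderOf_dvd_of_pow_eq_one
    have := (csgShift_zpow_eq_one (s := s) (r := r) (u := u) ((s * r * u : ℕ) : ℤ)).2
      (by rw [Int.cast_natCast, ZMod.natCast_self])
    rwa [zpow_natCast] at this
  · rw [← ZMod.natCast_eq_zero_iff, ← Int.cast_natCast, ← csgShift_zpow_eq_one, zpow_natCast]
    exact pow_orderOf_eq_one _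

lemma csgShift_free (hr : 1 ≤ r) (hsu : 3 ≤ s * u) (k : ℤ)
    (e : Sym2 (ZMod (s * r * u) ⊕ ZMod u)) (he : e ∈ (cycleStarGraph s r u).edgeSet)
    (h : Sym2.map ⇑(csgShift s r u ^ k) e = e) : csgShift s r u ^ k = 1 := by
  rw [csgShift_zpow_eq_one]
  rw [csg_mem_edge hr hsu] at he
  rcases he with ⟨v, rfl⟩ | ⟨v, rfl⟩
  · rw [Sym2.map_mk, csgShift_zpow_inl, csgShift_zpow_inl, Sym2.eq_iff] at h
    rcases h with ⟨h, -⟩ | ⟨h1, h2⟩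
    · simpa using h
    · exfalso
      have h1 := Sum.inl_injective h1
      have h2 := Sum.inl_injective h2
      apply csg_two_r_ne hr hsu (s := s) (u := u)
      have h3 := add_left_cancel h1
      rw [h3, add_assoc] at h2
      simpa using h2
  · rw [Sym2.map_mk, csgShift_zpow_inl, csgShift_zpow_inr, Sym2.eq_iff] at h
    rcases h with ⟨h, -⟩ | ⟨h1, h2⟩
    · simpa using h
    · simp at h1

end helpers

theorem stmt19 (s r u : ℕ) (hs : 1 ≤ s) (hr : 1 ≤ r) (hu : 2 ≤ u) (hsu : 3 ≤ s * u)
    (hgcd : Nat.gcd r u = 1) :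
    (cycleStarGraph s r u).Connected ∧
    (∃ g : cycleStarGraph s r u ≃g cycleStarGraph s r u,
      (∀ v : ZMod (s * r * u), g (Sum.inl v) = Sum.inl (v + 1)) ∧
      (∀ i : ZMod u, g (Sum.inr i) = Sum.inr (i + 1)) ∧
      orderOf g = s * r * u ∧
      -- exactly two orbits on the vertex set
      (∃ v₁ v₂ : ZMod (s * r * u) ⊕ ZMod u, ¬ (∃ k : ℤ, (g ^ k) v₁ = v₂) ∧
        ∀ v : ZMod (s * r * u) ⊕ ZMod u,
          (∃ k : ℤ, (g ^ k) v₁ = v) ∨ (∃ k : ℤ, (g ^ k) v₂ = v)) ∧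
      -- `⟨g⟩` acts freely on the edge set
      (∀ k : ℤ, ∀ e ∈ (cycleStarGraph s r u).edgeSet, Sym2.map ⇑(g ^ k) e = e → g ^ k = 1) ∧
      -- with exactly two orbits
      (∃ e₁ ∈ (cycleStarGraph s r u).edgeSet, ∃ e₂ ∈ (cycleStarGraph s r u).edgeSet,
        ¬ (∃ k : ℤ, Sym2.map ⇑(g ^ k) e₁ = e₂) ∧
        ∀ e ∈ (cycleStarGraph s r u).edgeSet,
          (∃ k : ℤ, Sym2.map ⇑(g ^ k) e₁ = e) ∨ (∃ k : ℤ, Sym2.map ⇑(g ^ k) e₂ = e)) ∧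
      -- each edge orbit has size `s * r * u`
      (∀ e ∈ (cycleStarGraph s r u).edgeSet,
        {e' : Sym2 (ZMod (s * r * u) ⊕ ZMod u) |
          ∃ k : ℤ, Sym2.map ⇑(g ^ k) e = e'}.ncard = s * r * u)) := by
  refine ⟨csg_connected hr hsu hgcd, csgShift s r u, csgShift_inl, csgShift_inr,
    csgShift_order, ?_, csgShift_free hr hsu, ?_, ?_⟩
  · refine ⟨Sum.inl 0, Sum.inr 0, ?_, ?_⟩
    · rintro ⟨k, hk⟩
      rw [csgShift_zpow_inl] at hk
      simp at hk
    · rintro (v | i)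
      · obtain ⟨k, rfl⟩ := ZMod.intCast_surjective v
        exact Or.inl ⟨k, by rw [csgShift_zpow_inl, zero_add]⟩
      · obtain ⟨k, rfl⟩ := ZMod.intCast_surjective i
        exact Or.inr ⟨k, by rw [csgShift_zpow_inr, zero_add]⟩
  · refine ⟨s(Sum.inl 0, Sum.inl (0 + (r : ZMod (s * r * u)))),
      (csg_mem_edge hr hsu _).2 (Or.inl ⟨0, rfl⟩), s(Sum.inl 0, Sum.inr
        (ZMod.castHom (⟨s * r, by ring⟩ : u ∣ s * r * u) (ZMod u) 0)),
      (csg_mem_edge hr hsu _).2 (Or.inr ⟨0, rfl⟩), ?_, ?_⟩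
    · rintro ⟨k, hk⟩
      rw [Sym2.map_mk, csgShift_zpow_inl, csgShift_zpow_inl, Sym2.eq_iff] at hk
      simp at hk
    · intro e he
      rw [csg_mem_edge hr hsu] at he
      rcases he with ⟨v, rfl⟩ | ⟨v, rfl⟩
      · obtain ⟨k, rfl⟩ := ZMod.intCast_surjective v
        refine Or.inl ⟨k, ?_⟩
        rw [Sym2.map_mk, csgShift_zpow_inl, csgShift_zpow_inl, zero_add, zero_add, add_comm]
      · obtain ⟨k, rfl⟩ := ZMod.intCast_surjective v
        refine Or.inr ⟨k, ?_⟩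
        rw [Sym2.map_mk, csgShift_zpow_inl, csgShift_zpow_inr, map_zero, zero_add, zero_add,
          map_intCast]
  · intro e he
    let f : Subgroup.zpowers (csgShift s r u) → Sym2 (ZMod (s * r * u) ⊕ ZMod u) :=
      fun h => Sym2.map ⇑(h : cycleStarGraph s r u ≃g cycleStarGraph s r u) e
    have hset : {e' : Sym2 (ZMod (s * r * u) ⊕ ZMod u) |
          ∃ k : ℤ, Sym2.map ⇑(csgShift s r u ^ k) e = e'} = Set.range f := by
      ext e'
      constructor
      · rintro ⟨k, rfl⟩
        exact ⟨⟨_, k, rfl⟩, rfl⟩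
      · rintro ⟨⟨_, k, rfl⟩, rfl⟩
        exact ⟨k, rfl⟩
    have hinj : Function.Injective f := by
      rintro ⟨_, a, rfl⟩ ⟨_, b, rfl⟩ hab
      apply Subtype.ext
      change Sym2.map ⇑(csgShift s r u ^ a) e = Sym2.map ⇑(csgShift s r u ^ b) e at hab
      change csgShift s r u ^ a = csgShift s r u ^ b
      have h1 : Sym2.map ⇑(csgShift s r u ^ (-b + a)) e = e := by
        have h2 := congrArg (Sym2.map ⇑(csgShift s r u ^ (-b))) hab
        rw [Sym2.map_map, Sym2.map_map, ← RelIso.coe_mul, ← RelIso.coe_mul, ← zpow_add,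
          ← zpow_add, neg_add_cancel, zpow_zero, RelIso.coe_one, Sym2.map_id] at h2
        exact h2
      have h3 := csgShift_free hr hsu _ e he h1
      rw [zpow_add, zpow_neg, inv_mul_eq_one] at h3
      exact h3.symm
    rw [hset, ← Set.image_univ, Set.ncard_image_of_injective _ hinj, Set.ncard_univ,
      Nat.card_zpowers, csgShift_order]
end
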